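/- Suppose α_2 ≠ 0 and f = (f_0, …, f_4) is a holomorphic solution of the A_4^(1) system with parameters α on a punctured disk D \ {t_0} that extends meromorphically to t_0 with simple poles, whose Laurent expansions at t_0 in T = t − t_0 satisfy f_0 = −1/T + O(1), f_1 = −3/T + O(1), f_2 = −(α_2/3)T + O(T^3) (so in particular f_2 has a simple zero at t_0), f_3 = 3/T + O(1), f_4 = 1/T + O(1). Then g = (f_0, f_1 − α_2/f_2, f_2, f_3 + α_2/f_2, f_4) is a solution of the A_4^(1) system with parameters β, where β_1 = α_1 + α_2, β_2 = −α_2, β_3 = α_3 + α_2, β_0 = α_0, β_4 = α_4; g extends meromorphically to t_0 with simple poles, and its residue vector at t_0 is (Res g_0, …, Res g_4) = (−1, 0, 0, 0, 1). -/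

import Mathlib

open Metric Topology Asymptotics

/-!
The differential equations for `g = s₂(f)` hold wherever `f₂ ≠ 0`: only `g₁` and `g₃` differ from
`f₁` and `f₃`, their sum is unchanged, and differentiating `α₂ / f₂` with the equation for `f₂`
reduces everything to an identity of rational functions.

For the local behaviour, `f₂ = -(α₂/3) T + O(T³)` with `α₂ ≠ 0` makes `f₂` equivalent to
`-(α₂/3) T`. Hence `f₂` has no zeros in a small punctured disk, and
`α₂ / f₂ + 3 / T = 3 (f₂ + (α₂/3) T) / (f₂ T) = O(T³ / T²) = O(1)`, so that `α₂ / f₂` cancels the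
polar parts `-3/T` of `f₁` and `3/T` of `f₃`.
-/

/-- A function `c T + O(T³)` with `c ≠ 0` is equivalent to `c T`. -/
lemma isEquivalent_linear_of_cubic {F : ℂ → ℂ} {c t0 : ℂ} (hc : c ≠ 0)
    (h : (fun t => F t - c * (t - t0)) =O[𝓝[≠] t0] fun t => (t - t0) ^ 3) :
    IsEquivalent (𝓝[≠] t0) F (fun t => c * (t - t0)) := by
  have hT : Filter.Tendsto (fun t : ℂ => t - t0) (𝓝[≠] t0) (𝓝 0) := by
    have : ContinuousAt (fun t : ℂ => t - t0) t0 := by fun_prop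
    simpa [ContinuousAt] using this.tendsto.mono_left nhdsWithin_le_nhds
  have h3 : (fun t : ℂ => (t - t0) ^ 3) =o[𝓝[≠] t0] fun t => t - t0 := by
    have := (isLittleO_pow_id (𝕜 := ℂ) (n := 3) (by norm_num)).comp_tendsto hT
    simpa [Function.comp_def] using this
  exact (h.trans_isLittleO h3).trans_isBigO (isBigO_self_const_mul hc _ _)

/-- If `F = -(a/3) T + O(T³)` with `a ≠ 0`, then `a / F` has polar part `-3 / T`. -/
lemma div_add_polar_isBigO_one {F : ℂ → ℂ} {a t0 : ℂ} (ha : a ≠ 0)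
    (h : (fun t => F t - (-(a / 3) * (t - t0))) =O[𝓝[≠] t0] fun t => (t - t0) ^ 3) :
    (fun t => a / F t + 3 * (t - t0)⁻¹) =O[𝓝[≠] t0] fun _ => (1 : ℂ) := by
  have hc : -(a / 3) ≠ 0 := by simpa using ha
  have hE := isEquivalent_linear_of_cubic hc h
  have hTne : ∀ᶠ t in 𝓝[≠] t0, t - t0 ≠ 0 := by
    filter_upwards [self_mem_nhdsWithin] with t ht using sub_ne_zero.2 ht
  have hFT : (fun t => t - t0) =O[𝓝[≠] t0] F :=
    (isBigO_self_const_mul hc _ _).trans hE.isBigO_symm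
  have hFne : ∀ᶠ t in 𝓝[≠] t0, F t ≠ 0 := by
    filter_upwards [hFT.eq_zero_imp, hTne] with t h1 h2 h3 using h2 (h1 h3)
  have hinv : (fun t => (F t)⁻¹) =O[𝓝[≠] t0] fun t => (t - t0)⁻¹ :=
    hFT.inv_rev (hTne.mono fun t ht h0 => absurd h0 ht)
  have hbd : (fun t : ℂ => t - t0) =O[𝓝[≠] t0] fun _ => (1 : ℂ) := by
    have : ContinuousAt (fun t : ℂ => t - t0) t0 := by fun_prop
    exact (this.tendsto.mono_left nhdsWithin_le_nhds).isBigO_one ℂ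
  have hmul := ((h.const_mul_left 3).mul hinv).mul (isBigO_refl (fun t : ℂ => (t - t0)⁻¹) (𝓝[≠] t0))
  refine (hmul.congr' ?_ ?_).trans hbd
  · filter_upwards [hTne, hFne] with t h1 h2
    field_simp
    ring
  · filter_upwards [hTne] with t h1
    field_simp

/-- Suppose `α₂ ≠ 0` and `f = (f₀,…,f₄)` solves the `A₄⁽¹⁾` system on a
punctured disk around `t₀`, with Laurent behaviour `f₀ = −1/T + O(1)`,
`f₁ = −3/T + O(1)`, `f₂ = −(α₂/3)T + O(T³)`, `f₃ = 3/T + O(1)`,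
`f₄ = 1/T + O(1)`.  Then `g = s₂(f) = (f₀, f₁ − α₂/f₂, f₂, f₃ + α₂/f₂, f₄)`
solves the `A₄⁽¹⁾` system with parameters
`β = (α₀, α₁+α₂, −α₂, α₃+α₂, α₄)` near `t₀`, extends meromorphically to `t₀`
with simple poles, and has residue vector `(−1, 0, 0, 0, 1)` at `t₀`. -/
theorem backlund_s2_A4 (α : Fin 5 → ℂ) (t0 : ℂ) (ρ : ℝ) (hρ : 0 < ρ)
    (hα2 : α 2 ≠ 0) (f : Fin 5 → ℂ → ℂ)
    (hf : ∀ j : Fin 5, ∀ t ∈ ball t0 ρ \ {t0},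
      HasDerivAt (f j)
        (f j t * (f (j + 1) t - f (j + 2) t + f (j + 3) t - f (j + 4) t) + α j) t)
    (h0 : (fun t => f 0 t - (-(t - t0)⁻¹)) =O[𝓝[≠] t0] fun _ => (1 : ℂ))
    (h1 : (fun t => f 1 t - (-3 * (t - t0)⁻¹)) =O[𝓝[≠] t0] fun _ => (1 : ℂ))
    (h2 : (fun t => f 2 t - (-(α 2 / 3) * (t - t0))) =O[𝓝[≠] t0]
      fun t => (t - t0) ^ 3)
    (h3 : (fun t => f 3 t - 3 * (t - t0)⁻¹) =O[𝓝[≠] t0] fun _ => (1 : ℂ))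
    (h4 : (fun t => f 4 t - (t - t0)⁻¹) =O[𝓝[≠] t0] fun _ => (1 : ℂ))
    (g : Fin 5 → ℂ → ℂ)
    (hg : ∀ t : ℂ, g 0 t = f 0 t ∧ g 1 t = f 1 t - α 2 / f 2 t ∧
      g 2 t = f 2 t ∧ g 3 t = f 3 t + α 2 / f 2 t ∧ g 4 t = f 4 t)
    (β : Fin 5 → ℂ)
    (hβ : β = ![α 0, α 1 + α 2, -α 2, α 3 + α 2, α 4]) :
    ∃ ε > (0 : ℝ), ε ≤ ρ ∧
      (∀ t ∈ ball t0 ε \ {t0}, f 2 t ≠ 0 ∧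
        ∀ j : Fin 5, HasDerivAt (g j)
          (g j t * (g (j + 1) t - g (j + 2) t + g (j + 3) t - g (j + 4) t) + β j) t) ∧
      ((fun t => g 0 t - (-(t - t0)⁻¹)) =O[𝓝[≠] t0] fun _ => (1 : ℂ)) ∧
      ((fun t => g 1 t) =O[𝓝[≠] t0] fun _ => (1 : ℂ)) ∧
      ((fun t => g 2 t) =O[𝓝[≠] t0] fun _ => (1 : ℂ)) ∧
      ((fun t => g 3 t) =O[𝓝[≠] t0] fun _ => (1 : ℂ)) ∧
      ((fun t => g 4 t - (t - t0)⁻¹) =O[𝓝[≠] t0] fun _ => (1 : ℂ)) := by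
  have hpol := div_add_polar_isBigO_one hα2 h2
  have hE := isEquivalent_linear_of_cubic (by simpa using hα2 : -(α 2 / 3) ≠ 0) h2
  have hbd : (fun t : ℂ => -(α 2 / 3) * (t - t0)) =O[𝓝[≠] t0] fun _ => (1 : ℂ) := by
    have : ContinuousAt (fun t : ℂ => -(α 2 / 3) * (t - t0)) t0 := by fun_prop
    exact (this.tendsto.mono_left nhdsWithin_le_nhds).isBigO_one ℂ
  have hne : ∀ᶠ t in 𝓝[≠] t0, f 2 t ≠ 0 := by
    filter_upwards [hE.isBigO_symm.eq_zero_imp, self_mem_nhdsWithin] with t h1 h2 h3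
    have := h1 h3
    simp [hα2, sub_eq_zero] at this
    exact h2 this
  obtain ⟨δ, hδ, hδne⟩ := Metric.mem_nhdsWithin_iff.1 hne
  have hg0 : g 0 = f 0 := funext fun t => (hg t).1
  have hg1 : g 1 = fun t => f 1 t - α 2 / f 2 t := funext fun t => (hg t).2.1
  have hg2 : g 2 = f 2 := funext fun t => (hg t).2.2.1
  have hg3 : g 3 = fun t => f 3 t + α 2 / f 2 t := funext fun t => (hg t).2.2.2.1
  have hg4 : g 4 = f 4 := funext fun t => (hg t).2.2.2.2
  refine ⟨min δ ρ, lt_min hδ hρ, min_le_right _ _, ?_, ?_, ?_, ?_, ?_, ?_⟩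
  · rintro t ⟨ht, htne⟩
    have hft : f 2 t ≠ 0 := hδne ⟨ball_subset_ball (min_le_left _ _) ht, htne⟩
    have hd := fun j => hf j t ⟨ball_subset_ball (min_le_right _ _) ht, htne⟩
    have d0 := hd 0
    have d1 := hd 1
    have d2 := hd 2
    have d3 := hd 3
    have d4 := hd 4
    have dq := (hasDerivAt_const t (α 2)).div d2 hft
    refine ⟨hft, fun j => ?_⟩
    have e5 : (1 + 4 : Fin 5) = 0 ∧ (2 + 3 : Fin 5) = 0 ∧ (2 + 4 : Fin 5) = 1 ∧
        (3 + 2 : Fin 5) = 0 ∧ (3 + 3 : Fin 5) = 1 ∧ (3 + 4 : Fin 5) = 2 ∧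
        (4 + 1 : Fin 5) = 0 ∧ (4 + 2 : Fin 5) = 1 ∧ (4 + 3 : Fin 5) = 2 ∧
        (4 + 4 : Fin 5) = 3 ∧ (1 + 1 : Fin 5) = 2 ∧ (1 + 2 : Fin 5) = 3 ∧
        (1 + 3 : Fin 5) = 4 ∧ (2 + 1 : Fin 5) = 3 ∧ (2 + 2 : Fin 5) = 4 ∧
        (3 + 1 : Fin 5) = 4 := by decide
    obtain ⟨a1, a2, a3, a4, a5, a6, a7, a8, a9, b1, b2, b3, b4, b5, b6, b7⟩ := e5
    simp only [zero_add, a1, a2, a3, a4, a5, a6, a7, a8, a9, b1, b2, b3, b4, b5, b6, b7]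
      at d0 d1 d2 d3 d4 dq
    have c0 : β 0 = α 0 := by simp [hβ]
    have c1 : β 1 = α 1 + α 2 := by simp [hβ]
    have c2 : β 2 = -α 2 := by simp [hβ]
    have c3 : β 3 = α 3 + α 2 := by simp [hβ]
    have c4 : β 4 = α 4 := by simp [hβ]
    have key : ∀ j : Fin 5, j = 0 ∨ j = 1 ∨ j = 2 ∨ j = 3 ∨ j = 4 := by decide
    rcases key j with rfl | rfl | rfl | rfl | rfl <;>
    simp only [zero_add, a1, a2, a3, a4, a5, a6, a7, a8, a9, b1, b2, b3, b4, b5, b6, b7,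
      hg0, hg1, hg2, hg3, hg4, c0, c1, c2, c3, c4]
    · refine HasDerivAt.congr_deriv (d0) ?_
      ring
    · refine HasDerivAt.congr_deriv (d1.sub dq) ?_
      field_simp
      ring
    · refine HasDerivAt.congr_deriv (d2) ?_
      field_simp
      ring
    · refine HasDerivAt.congr_deriv (d3.add dq) ?_
      field_simp
      ring
    · refine HasDerivAt.congr_deriv (d4) ?_
      ring
  · simpa only [hg0] using h0
  · rw [hg1]
    exact (h1.sub hpol).congr_left fun t => by ring
  · rw [hg2]
    exact hE.isBigO.trans hbd
  · rw [hg3]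
    exact (h3.add hpol).congr_left fun t => by ring
  · simpa only [hg4] using h4
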